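/- For every positive integer m there exists a constant C = C(m) > 0 (one may take C = e²·A_m^{2m}, where A_m is the constant in Biernacki's theorem) with the following property: if f(z) = Σ_{k≥0} a_k z^k is analytic in D_R and is (s, s+m)-valent in D_R for every nonnegative integer s, then, setting ρ = R^{−1}, there exist complex coefficients c_j(k) (1 ≤ j ≤ m, k ≥ m+1) such that a_k = Σ_{j=1}^m c_j(k)·a_{k−j} for all k ≥ m+1, and |c_j(k)| ≤ C·ρ^j for all j and k. -/

import Mathlib

-- The order of vanishing of `g` at `z` (zero if `g` is not analytic at `z`).
open scoped Classical in
noncomputable def ordAt (g : ℂ → ℂ) (z : ℂ) : ℕ∞ :=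
  if h : AnalyticAt ℂ g z then analyticOrderAt g z else 0

/-- The number of zeroes of `g` in `Ω`, counted with multiplicity. -/
noncomputable def solCount (g : ℂ → ℂ) (Ω : Set ℂ) : ℕ∞ :=
  ∑' z : Ω, ordAt g z

/-- `f` is `(s,p)`-valent in `Ω`: for every polynomial `P` of degree at most `s`,
the equation `f = P` has at most `p` solutions in `Ω`, counted with multiplicity. -/
def IsSPValentOn (f : ℂ → ℂ) (Ω : Set ℂ) (s p : ℕ) : Prop :=
  ∀ P : Polynomial ℂ, P.degree ≤ (s : ℕ) →
    solCount (fun z => f z - P.eval z) Ω ≤ (p : ℕ∞)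

/-- `g` is `p`-valent in `Ω`: for every constant `c`, the equation `g = c` has
at most `p` solutions in `Ω`, counted with multiplicity. -/
def IsPValentOn (g : ℂ → ℂ) (Ω : Set ℂ) (p : ℕ) : Prop :=
  ∀ c : ℂ, solCount (fun z => g z - c) Ω ≤ (p : ℕ∞)

/-!
Writing `f = P + z ^ s * g` with `P` the Taylor polynomial of degree `< s`, the equation `g = c` is
`f = P + c * z ^ s` with the solution `0` removed `s` times, so `(s, s + m)`-valency of `f` makes
the tail `g = ∑ a_{s+i} z ^ i` an `m`-valent function. It remains to bound the coefficient of index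
`m + 1` of an `m`-valent function by those of index `1, …, m` (Biernacki's inequality).

If `‖g - g 0‖ < K` on the disk of radius `δ`, then each `g - g 0 - K * a` with `‖a‖ = 1` has at most
`m` zeros, all outside that disk, and Jensen's formula averaged over `a` (Cartan's identity) bounds
the circle average of `log⁺ ‖(g - g 0) / K‖` at radius `t` by `m * log (t / δ)`. By the Poisson
formula this holds pointwise near `0` up to a factor close to `1`, so `g - g 0` grows at most like
`K * (t / δ) ^ (m + 1 / 2)`. The exponent is less than `m + 1`, while the terms of index `> m`
contribute only `O(δ ^ (m + 1))` to `K`: for small `δ` they are absorbed, and Cauchy's estimate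
concludes.

The recurrence for `a k` uses only the one among `a (k - 1), …, a (k - m)` that dominates.
-/

open Filter Metric Real Set Topology MeasureTheory Polynomial

section SolutionCount

lemma summable_enat {ι : Type*} (f : ι → ℕ∞) : Summable f :=
  ⟨_, tendsto_atTop_iSup fun _ _ h => Finset.sum_le_sum_of_subset h⟩

lemma ordAt_of_analyticAt {g : ℂ → ℂ} {z : ℂ} (hg : AnalyticAt ℂ g z) :
    ordAt g z = analyticOrderAt g z :=
  dif_pos hg

variable {f g : ℂ → ℂ} {Ω : Set ℂ}

lemma solCount_congr (hΩ : IsOpen Ω) (hfg : EqOn f g Ω) : solCount f Ω = solCount g Ω := by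
  refine tsum_congr fun z => ?_
  have heq := hfg.eventuallyEq_of_mem (hΩ.mem_nhds z.2)
  by_cases hf : AnalyticAt ℂ f z
  · rw [ordAt_of_analyticAt hf, ordAt_of_analyticAt (hf.congr heq), analyticOrderAt_congr heq]
  · rw [ordAt, ordAt, dif_neg hf, dif_neg (mt (analyticAt_congr heq).mpr hf)]

lemma solCount_mul (hf : AnalyticOnNhd ℂ f Ω) (hg : AnalyticOnNhd ℂ g Ω) :
    solCount (f * g) Ω = solCount f Ω + solCount g Ω := by
  rw [solCount, solCount, solCount, ← (summable_enat _).tsum_add (summable_enat _)]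
  refine tsum_congr fun z => ?_
  rw [ordAt_of_analyticAt (hf z z.2), ordAt_of_analyticAt (hg z z.2),
    ordAt_of_analyticAt ((hf z z.2).mul (hg z z.2)), analyticOrderAt_mul (hf z z.2) (hg z z.2)]

lemma solCount_const_mul (hg : AnalyticOnNhd ℂ g Ω) {c : ℂ} (hc : c ≠ 0) :
    solCount (fun z => c * g z) Ω = solCount g Ω := by
  have hconst : solCount (fun _ => c) Ω = 0 := by
    refine (tsum_congr fun z => ?_).trans tsum_zero
    rw [ordAt_of_analyticAt analyticAt_const, analyticAt_const.analyticOrderAt_eq_zero]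
    exact hc
  simpa only [hconst, zero_add] using! solCount_mul (analyticOnNhd_const (v := c)) hg

lemma sum_analyticOrderAt_le_solCount (hf : AnalyticOnNhd ℂ f Ω) {S : Finset ℂ}
    (hS : (S : Set ℂ) ⊆ Ω) : ∑ z ∈ S, analyticOrderAt f z ≤ solCount f Ω := by
  classical
  have hsum : ∑ z ∈ S, analyticOrderAt f z = ∑ z ∈ S.subtype (· ∈ Ω), ordAt f z := by
    rw [Finset.sum_subtype_of_mem (ordAt f) fun z hz => hS hz]
    exact Finset.sum_congr rfl fun z hz => (ordAt_of_analyticAt (hf z (hS hz))).symm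
  exact hsum.trans_le ((summable_enat _).sum_le_tsum _ fun _ _ => zero_le)

lemma le_solCount_pow (h0 : (0 : ℂ) ∈ Ω) (s : ℕ) : (s : ℕ∞) ≤ solCount (fun z => z ^ s) Ω := by
  have hord : analyticOrderAt (fun z : ℂ => z ^ s) 0 = s := by
    simpa [analyticOrderAt_id] using! analyticOrderAt_pow (analyticAt_id (𝕜 := ℂ) (z := 0)) s
  simpa [hord] using sum_analyticOrderAt_le_solCount (f := fun z => z ^ s)
    (S := {0}) (fun z _ => analyticAt_id.pow s) (by simpa using h0)

end SolutionCount

section PowerSeries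

variable {b : ℕ → ℂ} {g : ℂ → ℂ} {R : ℝ}

lemma hasFPowerSeriesOnBall_of_hasSum (hR : 0 < R)
    (hg : ∀ z ∈ ball (0 : ℂ) R, HasSum (fun k => b k * z ^ k) (g z)) :
    HasFPowerSeriesOnBall g (.ofScalars ℂ b) 0 (ENNReal.ofReal R) := by
  refine ⟨?_, by simpa using hR, fun {z} hz => ?_⟩
  · refine ENNReal.le_of_forall_nnreal_lt fun r hr => ?_
    have hrR : (r : ℝ) < R := Real.lt_toNNReal_iff_coe_lt.1 (ENNReal.coe_lt_coe.1 hr)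
    have hr_mem : ((r : ℝ) : ℂ) ∈ ball (0 : ℂ) R := by simpa using hrR
    refine FormalMultilinearSeries.le_radius_of_tendsto (l := 0) _ ?_
    simpa [FormalMultilinearSeries.ofScalars_norm] using
      (hg _ hr_mem).summable.tendsto_atTop_zero.norm
  · have hz' : z ∈ ball (0 : ℂ) R := by rwa [eball_ofReal] at hz
    simpa [FormalMultilinearSeries.ofScalars_apply_eq, mul_comm] using hg z hz'

lemma analyticOnNhd_of_hasSum (hR : 0 < R)
    (hg : ∀ z ∈ ball (0 : ℂ) R, HasSum (fun k => b k * z ^ k) (g z)) :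
    AnalyticOnNhd ℂ g (ball 0 R) := by
  simpa using (hasFPowerSeriesOnBall_of_hasSum hR hg).analyticOnNhd

lemma eq_coeff_zero_of_hasSum (hR : 0 < R)
    (hg : ∀ z ∈ ball (0 : ℂ) R, HasSum (fun k => b k * z ^ k) (g z)) : g 0 = b 0 := by
  simpa using ((hasFPowerSeriesOnBall_of_hasSum hR hg).hasFPowerSeriesAt.coeff_zero 1).symm

lemma norm_coeff_mul_pow_le_of_hasSum
    (hg : ∀ z ∈ ball (0 : ℂ) R, HasSum (fun k => b k * z ^ k) (g z))
    {r M : ℝ} (hr : 0 < r) (hrR : r < R) (hM : ∀ z ∈ sphere (0 : ℂ) r, ‖g z - g 0‖ ≤ M)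
    {n : ℕ} (hn : 0 < n) : ‖b n‖ * r ^ n ≤ M := by
  have hps := (hasFPowerSeriesOnBall_of_hasSum (hr.trans hrR) hg).hasFPowerSeriesAt
  have hcoeff : b n = iteratedDeriv n g 0 / n.factorial :=
    congrFun (FormalMultilinearSeries.ofScalars_series_injective ℂ ℂ
      (hps.eq_formalMultilinearSeries hps.analyticAt.hasFPowerSeriesAt)) n
  have hdiff : DiffContOnCl ℂ (fun z => -g 0 + g z) (ball 0 r) :=
    ((analyticOnNhd_of_hasSum (hr.trans hrR) hg).mono (closure_ball_subset_closedBall.trans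
      (closedBall_subset_ball hrR))).differentiableOn.diffContOnCl.const_add _
  have hcauchy := Complex.norm_iteratedDeriv_le_of_forall_mem_sphere_norm_le n hr hdiff
    fun z hz => by simpa only [neg_add_eq_sub] using hM z hz
  rw [iteratedDeriv_const_add hn, mul_div_assoc, ← div_le_iff₀' (by positivity),
    le_div_iff₀ (by positivity)] at hcauchy
  simpa [hcoeff] using hcauchy

lemma hasSum_tail (hg : ∀ z ∈ ball (0 : ℂ) R, HasSum (fun k => b k * z ^ k) (g z)) (s : ℕ)
    {z : ℂ} (hz : z ∈ ball 0 R) :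
    HasSum (fun i => b (s + i) * z ^ i) (∑' i, b (s + i) * z ^ i) := by
  refine Summable.hasSum ?_
  rcases eq_or_ne z 0 with rfl | hz0
  · exact summable_of_ne_finset_zero (s := {0}) fun i hi => by simp_all
  · rw [← summable_mul_left_iff (pow_ne_zero s hz0)]
    refine ((summable_nat_add_iff s).2 (hg z hz).summable).congr fun i => ?_
    rw [add_comm i s, pow_add]
    ring

lemma eq_sum_add_pow_mul_tail (hg : ∀ z ∈ ball (0 : ℂ) R, HasSum (fun k => b k * z ^ k) (g z))
    (s : ℕ) {z : ℂ} (hz : z ∈ ball 0 R) :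
    g z = ∑ i ∈ Finset.range s, b i * z ^ i + z ^ s * ∑' i, b (s + i) * z ^ i := by
  rw [← (hg z hz).tsum_eq, ← (hg z hz).summable.sum_add_tsum_nat_add s, ← tsum_mul_left]
  congr 2 with i
  rw [add_comm i s, pow_add]
  ring

lemma IsSPValentOn.isPValentOn_tail (hR : 0 < R)
    (hg : ∀ z ∈ ball (0 : ℂ) R, HasSum (fun k => b k * z ^ k) (g z)) {s m : ℕ}
    (hv : IsSPValentOn g (ball 0 R) s (s + m)) :
    IsPValentOn (fun z => ∑' i, b (s + i) * z ^ i) (ball 0 R) m := by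
  intro c
  set h : ℂ → ℂ := fun z => ∑' i, b (s + i) * z ^ i
  let P : ℂ[X] := ∑ i ∈ Finset.range s, C (b i) * X ^ i + C c * X ^ s
  have hP : P.degree ≤ s := by
    refine degree_add_le_of_degree_le ((degree_sum_le _ _).trans (Finset.sup_le fun i hi => ?_))
      (degree_C_mul_X_pow_le s c)
    exact (degree_C_mul_X_pow_le i _).trans (by exact_mod_cast (Finset.mem_range.1 hi).le)
  have hfactor : EqOn (fun z => g z - P.eval z) ((fun z => z ^ s) * fun z => h z - c)
      (ball 0 R) := by
    intro z hz
    simp only [Pi.mul_apply, P, eval_add, eval_finsetSum, eval_mul, eval_C, eval_pow, eval_X, h,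
      eq_sum_add_pow_mul_tail hg s hz]
    ring
  have hh : AnalyticOnNhd ℂ h (ball 0 R) := analyticOnNhd_of_hasSum hR fun z => hasSum_tail hg s
  have hhc : AnalyticOnNhd ℂ (fun z => h z - c) (ball 0 R) := hh.sub analyticOnNhd_const
  have hcount := hv P hP
  rw [solCount_congr isOpen_ball hfactor, solCount_mul (analyticOnNhd_id.fun_pow s) hhc,
    Nat.cast_add] at hcount
  exact (ENat.add_le_add_iff_left (ENat.natCast_ne_top s)).1
    ((add_le_add_left (le_solCount_pow (mem_ball_self hR) s) _).trans hcount)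

end PowerSeries

section Poisson

lemma exists_polynomial_re_eval_eq_of_mem_span_fourier {T : ℝ} {h : C(AddCircle T, ℂ)}
    (hh : h ∈ Submodule.span ℂ (range (@fourier T))) :
    ∃ Q : ℂ[X], ∀ x, (h x).re = (Q.eval (AddCircle.toCircle x : ℂ)).re := by
  suffices ∀ c : ℂ, ∃ Q : ℂ[X], ∀ x, (c * h x).re = (Q.eval (AddCircle.toCircle x : ℂ)).re by
    simpa using this 1
  induction hh using Submodule.span_induction with
  | zero => exact fun _ => ⟨0, by simp⟩
  | add h₁ h₂ _ _ ih₁ ih₂ =>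
    intro c
    obtain ⟨Q₁, hQ₁⟩ := ih₁ c
    obtain ⟨Q₂, hQ₂⟩ := ih₂ c
    exact ⟨Q₁ + Q₂, fun x => by simp [mul_add, ← hQ₁, ← hQ₂]⟩
  | smul d h _ ih =>
    intro c
    obtain ⟨Q, hQ⟩ := ih (c * d)
    exact ⟨Q, fun x => by simp [← hQ, mul_assoc]⟩
  | mem _ hmem =>
    obtain ⟨n, rfl⟩ := hmem
    intro c
    obtain ⟨k, rfl | rfl⟩ := n.eq_nat_or_neg
    · exact ⟨C c * X ^ k, fun x => by simp [AddCircle.toCircle_nsmul]⟩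
    · refine ⟨C (starRingEnd ℂ c) * X ^ k, fun x => ?_⟩
      rw [fourier_neg, ← Complex.conj_re]
      simp [AddCircle.toCircle_nsmul]

lemma exists_differentiable_abs_re_sub_lt {φ : ℂ → ℝ} {c : ℂ} {R : ℝ} (hR : 0 < R)
    (hφ : ContinuousOn φ (sphere c R)) {ε : ℝ} (hε : 0 < ε) :
    ∃ h : ℂ → ℂ, Differentiable ℂ h ∧ ∀ z ∈ sphere c R, |(h z).re - φ z| < ε := by
  have hmem (ζ : Circle) : c + R * (ζ : ℂ) ∈ sphere c R := by
    simp [abs_of_pos hR, Circle.norm_coe]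
  let ψ : C(UnitAddCircle, ℂ) := ⟨fun x => φ (c + R * AddCircle.toCircle x),
    Complex.continuous_ofReal.comp (hφ.comp_continuous (by fun_prop) fun x => hmem _)⟩
  have hψ : ψ ∈ closure (Submodule.span ℂ (range (@fourier 1)) : Set C(UnitAddCircle, ℂ)) := by
    rw [← Submodule.topologicalClosure_coe, span_fourier_closure_eq_top]
    trivial
  obtain ⟨h, hh, hdist⟩ := Metric.mem_closure_iff.1 hψ ε hε
  obtain ⟨Q, hQ⟩ := exists_polynomial_re_eval_eq_of_mem_span_fourier hh
  refine ⟨fun z => Q.eval ((z - c) / R), by fun_prop, fun z hz => ?_⟩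
  obtain ⟨x, hx⟩ : ∃ x : UnitAddCircle, (AddCircle.toCircle x : ℂ) = (z - c) / R := by
    let ζ : Circle := ⟨(z - c) / R, by
      simpa [Submonoid.unitSphere, abs_of_pos hR, hR.ne', div_eq_one_iff_eq, dist_eq_norm] using hz⟩
    obtain ⟨x, hx⟩ := (AddCircle.homeomorphCircle one_ne_zero).surjective ζ
    exact ⟨x, by rw [← AddCircle.homeomorphCircle_apply one_ne_zero, hx]⟩
  have hz' : c + R * ((z - c) / R) = z := by
    field_simp [Complex.ofReal_ne_zero.2 hR.ne']
    ring
  calc |(Q.eval ((z - c) / R)).re - φ z| = |(h x - ψ x).re| := by simp [hQ, hx, ψ, hz']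
    _ ≤ ‖h x - ψ x‖ := Complex.abs_re_le_norm _
    _ ≤ dist ψ h := by rw [← dist_eq_norm, dist_comm]; exact ContinuousMap.dist_apply_le_dist x
    _ < ε := hdist

variable {φ : ℂ → ℝ} {c w : ℂ} {R : ℝ}

lemma poissonKernel_nonneg_and_le {z : ℂ} (hz : z ∈ sphere c R) (hw : w ∈ ball c R) :
    0 ≤ poissonKernel c w z ∧ poissonKernel c w z ≤ (R + ‖w - c‖) / (R - ‖w - c‖) := by
  rw [poissonKernel_eq_re_herglotzRieszKernel]
  refine ⟨le_trans ?_ (le_re_herglotzRieszKernel hz hw), re_herglotzRieszKernel_le hz hw⟩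
  have hR := pos_of_mem_ball hw
  have hwR : ‖w - c‖ < R := by rwa [← mem_ball_iff_norm]
  exact div_nonneg (by linarith) (by positivity)

lemma re_le_mul_circleAverage {h : ℂ → ℂ} (hh : Differentiable ℂ h)
    (hφ : ContinuousOn φ (sphere c R)) (hφ0 : ∀ z ∈ sphere c R, 0 ≤ φ z)
    (hle : ∀ z ∈ sphere c R, (h z).re ≤ φ z) (hw : w ∈ ball c R) :
    (h w).re ≤ (R + ‖w - c‖) / (R - ‖w - c‖) * circleAverage φ c R := by
  have hR := pos_of_mem_ball hw
  have hharm : InnerProductSpace.HarmonicOnNhd (fun z => (h z).re) (closedBall c R) :=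
    fun z _ => (hh.analyticAt z).harmonicAt_re
  have hkernel : ContinuousOn (poissonKernel c w) (sphere c R) := by
    rw [poissonKernel_eq_re_herglotzRieszKernel, ← abs_of_pos hR]
    exact Complex.continuous_re.comp_continuousOn (continuousOn_herglotzRieszKernel_sphere hw)
  have hre : Continuous fun z => (h z).re := Complex.continuous_re.comp hh.continuous
  rw [← hharm.circleAverage_poissonKernel_smul hw, ← smul_eq_mul, ← circleAverage_smul]
  refine circleAverage_mono ((hkernel.smul hre.continuousOn).circleIntegrable hR.le)
    ((hφ.const_smul _).circleIntegrable hR.le) fun z hz => ?_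
  rw [abs_of_pos hR] at hz
  obtain ⟨hP0, hP⟩ := poissonKernel_nonneg_and_le hz hw
  exact (mul_le_mul_of_nonneg_left (hle z hz) hP0).trans
    (mul_le_mul_of_nonneg_right hP (hφ0 z hz))

-- `φ` is uniformly close to the real part of an entire `h`, so the maximum principle applies
-- to `f * exp (-h)`, and the Poisson formula to `h`.
lemma norm_le_exp_mul_circleAverage {f : ℂ → ℂ} (hf : DiffContOnCl ℂ f (ball c R))
    (hφ : ContinuousOn φ (sphere c R)) (hφ0 : ∀ z ∈ sphere c R, 0 ≤ φ z)
    (hle : ∀ z ∈ sphere c R, ‖f z‖ ≤ exp (φ z)) (hw : w ∈ ball c R) :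
    ‖f w‖ ≤ exp ((R + ‖w - c‖) / (R - ‖w - c‖) * circleAverage φ c R) := by
  have hR := pos_of_mem_ball hw
  set κ := (R + ‖w - c‖) / (R - ‖w - c‖)
  have hbound : ∀ ε > 0, ‖f w‖ ≤ exp (κ * (circleAverage φ c R + ε) + ε) := by
    intro ε hε
    obtain ⟨h, hh, hφh⟩ := exists_differentiable_abs_re_sub_lt hR hφ hε
    have hmax : ‖f w * Complex.exp (-h w)‖ ≤ exp ε := by
      refine Complex.norm_le_of_forall_mem_frontier_norm_le isBounded_ball
        (hf.smul hh.fun_neg.cexp.diffContOnCl) (fun z hz => ?_) (subset_closure hw)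
      rw [frontier_ball _ hR.ne'] at hz
      rw [smul_eq_mul, norm_mul, Complex.norm_exp, Complex.neg_re]
      grw [hle z hz, ← exp_add]
      exact exp_le_exp.2 (by linarith [(abs_lt.1 (hφh z hz)).1])
    have hre : (h w).re ≤ κ * circleAverage (fun z => φ z + ε) c R :=
      re_le_mul_circleAverage hh (hφ.add_const ε) (fun z hz => add_nonneg (hφ0 z hz) hε.le)
        (fun z hz => by linarith [(abs_lt.1 (hφh z hz)).2]) hw
    rw [circleAverage_fun_add (hφ.circleIntegrable hR.le) (circleIntegrable_const ..),
      circleAverage_const] at hre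
    rw [norm_mul, Complex.norm_exp, Complex.neg_re, exp_neg, ← div_eq_mul_inv,
      div_le_iff₀ (exp_pos _), ← exp_add] at hmax
    exact hmax.trans (exp_le_exp.2 (by linarith))
  have hlim : Tendsto (fun ε => exp (κ * (circleAverage φ c R + ε) + ε)) (𝓝[>] 0)
      (𝓝 (exp (κ * circleAverage φ c R))) :=
    (Continuous.tendsto' (by fun_prop) _ _ (by simp)).mono_left nhdsWithin_le_nhds
  exact ge_of_tendsto hlim (eventually_nhdsWithin_of_forall hbound)

end Poisson

section Cartan

lemma setIntegral_log_norm_sub_circleMap (x : ℂ) :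
    ∫ θ in Ioc 0 (2 * π), log ‖x - circleMap 0 1 θ‖ = 2 * π * log⁺ ‖x‖ := by
  rw [← circleAverage_log_norm_sub_const_eq_posLog, circleAverage_def, smul_eq_mul,
    mul_inv_cancel_left₀ two_pi_pos.ne', intervalIntegral.integral_of_le two_pi_pos.le]
  simp_rw [norm_sub_rev]

lemma integrableOn_log_norm_sub_circleMap (x : ℂ) :
    IntegrableOn (fun θ => log ‖x - circleMap 0 1 θ‖) (Ioc 0 (2 * π)) := by
  have h := circleIntegrable_log_norm_sub_const (a := x) (c := 0) 1
  rw [CircleIntegrable, intervalIntegrable_iff_integrableOn_Ioc_of_le two_pi_pos.le] at h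
  simpa only [norm_sub_rev] using h

lemma abs_log_norm_sub_circleMap_le (x : ℂ) (θ : ℝ) :
    |log ‖x - circleMap 0 1 θ‖| ≤
      2 * (log⁺ ‖x‖ + log 2) - log ‖x - circleMap 0 1 θ‖ := by
  have hpos : log⁺ ‖x - circleMap 0 1 θ‖ ≤ log⁺ ‖x‖ + log 2 := by
    simpa [sub_eq_add_neg, add_comm] using posLog_norm_add_le x (-circleMap 0 1 θ)
  have hlog : log ‖x - circleMap 0 1 θ‖ ≤ log⁺ ‖x - circleMap 0 1 θ‖ := le_max_right _ _
  have hnonneg : 0 ≤ log⁺ ‖x - circleMap 0 1 θ‖ := posLog_nonneg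
  rw [abs_le]
  constructor <;> linarith

variable {α : Type*} [MeasurableSpace α] {μ : Measure α} [IsFiniteMeasure μ] {φ : α → ℂ}

lemma integrable_log_norm_sub_circleMap_prod (hφ : Measurable φ)
    (hint : Integrable (fun x => log⁺ ‖φ x‖) μ) :
    Integrable (fun p : ℝ × α => log ‖φ p.2 - circleMap 0 1 p.1‖)
      ((volume.restrict (Ioc 0 (2 * π))).prod μ) := by
  have hmeas : Measurable fun p : ℝ × α => log ‖φ p.2 - circleMap 0 1 p.1‖ := by fun_prop
  rw [integrable_prod_iff' hmeas.aestronglyMeasurable]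
  refine ⟨.of_forall fun x => integrableOn_log_norm_sub_circleMap (φ x), ?_⟩
  refine (((hint.add (integrable_const (2 * log 2))).const_mul (2 * π)).mono'
    hmeas.norm.stronglyMeasurable.integral_prod_left'.aestronglyMeasurable)
    (.of_forall fun x => ?_)
  have hx := integrableOn_log_norm_sub_circleMap (φ x)
  rw [norm_of_nonneg (integral_nonneg fun _ => norm_nonneg _)]
  calc ∫ θ in Ioc 0 (2 * π), ‖log ‖φ x - circleMap 0 1 θ‖‖
      ≤ ∫ θ in Ioc 0 (2 * π), (2 * (log⁺ ‖φ x‖ + log 2) - log ‖φ x - circleMap 0 1 θ‖) :=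
        integral_mono hx.norm ((integrable_const _).sub hx)
          (abs_log_norm_sub_circleMap_le (φ x))
    _ = 2 * π * (log⁺ ‖φ x‖ + 2 * log 2) := by
        rw [integral_sub (integrable_const _) hx, setIntegral_log_norm_sub_circleMap]
        simp only [integral_const, MeasurableSet.univ, measureReal_restrict_apply, univ_inter,
          volume_real_Ioc, sub_zero, two_pi_pos.le, sup_of_le_left, smul_eq_mul]
        ring

lemma integral_posLog_norm_le (hφ : Measurable φ) (hint : Integrable (fun x => log⁺ ‖φ x‖) μ)
    {B : ℝ} (hB : ∀ a ∈ sphere (0 : ℂ) 1, ∫ x, log ‖φ x - a‖ ∂μ ≤ B) :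
    ∫ x, log⁺ ‖φ x‖ ∂μ ≤ B := by
  have hprod := integrable_log_norm_sub_circleMap_prod hφ hint
  suffices 2 * π * ∫ x, log⁺ ‖φ x‖ ∂μ ≤ 2 * π * B from le_of_mul_le_mul_left this two_pi_pos
  calc 2 * π * ∫ x, log⁺ ‖φ x‖ ∂μ
      = ∫ x, (∫ θ in Ioc 0 (2 * π), log ‖φ x - circleMap 0 1 θ‖) ∂μ := by
        simp_rw [setIntegral_log_norm_sub_circleMap, integral_const_mul]
    _ = ∫ θ in Ioc 0 (2 * π), ∫ x, log ‖φ x - circleMap 0 1 θ‖ ∂μ :=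
        (integral_integral_swap hprod).symm
    _ ≤ ∫ _ in Ioc 0 (2 * π), B :=
        integral_mono hprod.integral_prod_left (integrable_const B) fun θ => hB _ (by simp)
    _ = 2 * π * B := by simp [two_pi_pos.le]

lemma circleAverage_posLog_norm_le {f : ℂ → ℂ} {c : ℂ} {R B : ℝ}
    (hf : ContinuousOn f (sphere c |R|))
    (hB : ∀ a ∈ sphere (0 : ℂ) 1, circleAverage (fun z => log ‖f z - a‖) c R ≤ B) :
    circleAverage (fun z => log⁺ ‖f z‖) c R ≤ B := by
  have hcont : Continuous fun θ => f (circleMap c R θ) :=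
    hf.comp_continuous (continuous_circleMap c R) (circleMap_mem_sphere' c R)
  simp only [circleAverage_def, smul_eq_mul, inv_mul_le_iff₀ two_pi_pos,
    intervalIntegral.integral_of_le two_pi_pos.le] at hB ⊢
  exact integral_posLog_norm_le hcont.measurable
    ((continuous_posLog.comp hcont.norm).integrableOn_Ioc) hB

end Cartan

section Jensen

open MeromorphicOn

variable {f : ℂ → ℂ} {c : ℂ} {t δ : ℝ} {m : ℕ}

lemma sum_divisor_le {K Ω : Set ℂ} (hf : AnalyticOnNhd ℂ f Ω) (hK : K ⊆ Ω)
    (hm : solCount f Ω ≤ m) {S : Finset ℂ} (hS : (S : Set ℂ) ⊆ K) :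
    ∑ u ∈ S, divisor f K u ≤ m := by
  have hle : ∑ u ∈ S, analyticOrderAt f u ≤ m :=
    (sum_analyticOrderAt_le_solCount hf (hS.trans hK)).trans hm
  have hfin : ∀ u ∈ S, analyticOrderAt f u ≠ ⊤ := fun u hu htop =>
    ENat.natCast_ne_top m (top_le_iff.1 (htop ▸ (Finset.single_le_sum_of_canonicallyOrdered
      (f := analyticOrderAt f) hu).trans hle))
  have hdiv : ∑ u ∈ S, divisor f K u = ((∑ u ∈ S, analyticOrderNatAt f u : ℕ) : ℤ) := by
    push_cast
    refine Finset.sum_congr rfl fun u hu => ?_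
    rw [AnalyticOnNhd.divisor_apply (hf.mono hK) (hS hu), ← Nat.cast_analyticOrderNatAt (hfin u hu)]
    simp
  rw [hdiv]
  rw [← Finset.sum_congr rfl fun u hu => Nat.cast_analyticOrderNatAt (hfin u hu)] at hle
  exact_mod_cast hle

lemma le_norm_sub_of_divisor_ne_zero (hf : AnalyticOnNhd ℂ f (closedBall c t))
    (hδ : ∀ z ∈ closedBall c δ, f z ≠ 0) {u : ℂ} (hu : divisor f (closedBall c t) u ≠ 0) :
    δ ≤ ‖c - u‖ := by
  by_contra! hlt
  have hmem : u ∈ closedBall c t := by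
    by_contra hnot
    exact hu ((divisor f _).apply_eq_zero_of_notMem hnot)
  refine hu ?_
  rw [AnalyticOnNhd.divisor_apply hf hmem, (hf u hmem).analyticOrderAt_eq_zero.2 (hδ u ?_)]
  · rfl
  · rw [mem_closedBall', dist_eq_norm]
    exact hlt.le

lemma circleAverage_log_norm_le_of_solCount_le {Ω : Set ℂ} (hf : AnalyticOnNhd ℂ f Ω)
    (hΩ : closedBall c t ⊆ Ω) (hm : solCount f Ω ≤ m) (hδ0 : 0 < δ) (hδt : δ ≤ t)
    (hδ : ∀ z ∈ closedBall c δ, f z ≠ 0) :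
    circleAverage (fun z => log ‖f z‖) c t ≤ m * log (t / δ) + log ‖f c‖ := by
  have ht : 0 < t := hδ0.trans_le hδt
  have hft := hf.mono hΩ
  have hjensen := AnalyticOnNhd.circleAverage_log_norm ht.ne' (by rwa [abs_of_pos ht])
    (hδ c (mem_closedBall_self hδ0.le))
  rw [abs_of_pos ht] at hjensen
  set D := divisor f (closedBall c t)
  have hfin : D.support.Finite := D.finiteSupport (isCompact_closedBall c t)
  rw [finsum_eq_sum_of_support_subset (s := hfin.toFinset) _ fun u hu => by
    simpa using left_ne_zero_of_mul hu] at hjensen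
  rw [hjensen]
  have hlog : 0 ≤ log (t / δ) := log_nonneg ((one_le_div hδ0).2 hδt)
  have hcount : (∑ u ∈ hfin.toFinset, (D u : ℝ)) ≤ m := by
    exact_mod_cast sum_divisor_le hf hΩ hm (by simpa using D.supportWithinDomain)
  gcongr
  calc ∑ u ∈ hfin.toFinset, D u * log (t * ‖c - u‖⁻¹)
      ≤ ∑ u ∈ hfin.toFinset, D u * log (t / δ) := by
        refine Finset.sum_le_sum fun u hu => ?_
        have hu : δ ≤ ‖c - u‖ := le_norm_sub_of_divisor_ne_zero hft hδ (by simpa using hu)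
        have hpos : 0 < ‖c - u‖ := hδ0.trans_le hu
        have hD : (0 : ℝ) ≤ D u := by exact_mod_cast AnalyticOnNhd.divisor_nonneg hft u
        rw [← div_eq_mul_inv]
        gcongr
    _ ≤ m * log (t / δ) := by rw [← Finset.sum_mul]; gcongr

end Jensen

section Growth

variable {g : ℂ → ℂ} {Ω : Set ℂ} {c w : ℂ} {m : ℕ} {t δ K : ℝ}

lemma IsPValentOn.circleAverage_posLog_norm_le (hv : IsPValentOn g Ω m)
    (hg : AnalyticOnNhd ℂ g Ω) (hΩ : closedBall c t ⊆ Ω) (hδ0 : 0 < δ) (hδt : δ ≤ t) (hK : 0 < K)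
    (hgK : ∀ z ∈ closedBall c δ, ‖g z - g c‖ < K) :
    circleAverage (fun z => log⁺ ‖(K : ℂ)⁻¹ * (g z - g c)‖) c t ≤ m * log (t / δ) := by
  have ht : 0 < t := hδ0.trans_le hδt
  have hKne : (K : ℂ) ≠ 0 := Complex.ofReal_ne_zero.2 hK.ne'
  have hcont : ContinuousOn (fun z => (K : ℂ)⁻¹ * (g z - g c)) (sphere c |t|) := by
    rw [abs_of_pos ht]
    exact ((hg.continuousOn.mono (sphere_subset_closedBall.trans hΩ)).sub
      continuousOn_const).const_mul _
  refine _root_.circleAverage_posLog_norm_le hcont fun a ha => ?_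
  have ha1 : ‖a‖ = 1 := mem_sphere_zero_iff_norm.1 ha
  have hshift (z : ℂ) : (K : ℂ)⁻¹ * (g z - g c) - a = (K : ℂ)⁻¹ * (g z - (g c + K * a)) := by
    field_simp
    ring
  have hgK' : AnalyticOnNhd ℂ (fun z => g z - (g c + K * a)) Ω := hg.sub analyticOnNhd_const
  have hjensen := circleAverage_log_norm_le_of_solCount_le
    (f := fun z => (K : ℂ)⁻¹ * (g z - (g c + K * a))) (analyticOnNhd_const.mul hgK') hΩ
    ((solCount_const_mul hgK' (inv_ne_zero hKne)).trans_le (hv _)) hδ0 hδt fun z hz h0 => ?_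
  · simpa only [← hshift, sub_self, mul_zero, zero_sub, norm_neg, ha1, log_one, add_zero]
      using hjensen
  · have hnorm : ‖g z - g c‖ = K := by
      rw [(inv_mul_eq_iff_eq_mul₀ hKne).1 (sub_eq_zero.1 ((hshift z).trans h0)), norm_mul, ha1,
        Complex.norm_of_nonneg hK.le, mul_one]
    exact (hgK z hz).ne hnorm

lemma IsPValentOn.norm_sub_le (hv : IsPValentOn g Ω m) (hg : AnalyticOnNhd ℂ g Ω)
    (hΩ : closedBall c t ⊆ Ω) (hδ0 : 0 < δ) (hδt : δ ≤ t) (hK : 0 < K)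
    (hgK : ∀ z ∈ closedBall c δ, ‖g z - g c‖ < K) (hw : w ∈ ball c t) :
    ‖g w - g c‖ ≤ K * (t / δ) ^ ((t + ‖w - c‖) / (t - ‖w - c‖) * m) := by
  have ht : 0 < t := hδ0.trans_le hδt
  have hwt : ‖w - c‖ < t := mem_ball_iff_norm.1 hw
  set f : ℂ → ℂ := fun z => (K : ℂ)⁻¹ * (g z - g c)
  have hf : DifferentiableOn ℂ f (closedBall c t) :=
    ((hg.differentiableOn.mono hΩ).sub_const _).const_mul _
  have hposLog : ContinuousOn (fun z => log⁺ ‖f z‖) (sphere c t) :=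
    continuous_posLog.comp_continuousOn (hf.continuousOn.mono sphere_subset_closedBall).norm
  have hexp (x : ℝ) (hx : 0 ≤ x) : x ≤ exp (log⁺ x) := by
    rcases hx.eq_or_lt with rfl | hx
    · exact (exp_pos _).le
    · exact (log_le_iff_le_exp hx).1 (le_max_right _ _)
  have hpoisson := norm_le_exp_mul_circleAverage (hf.diffContOnCl_ball subset_rfl) hposLog
    (fun _ _ => posLog_nonneg) (fun z _ => hexp _ (norm_nonneg _)) hw
  have hfw : ‖f w‖ = ‖g w - g c‖ / K := by
    simp [f, abs_of_pos hK, div_eq_inv_mul]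
  have hκ : 0 ≤ (t + ‖w - c‖) / (t - ‖w - c‖) :=
    div_nonneg (by positivity) (sub_nonneg.2 hwt.le)
  rw [hfw, div_le_iff₀' hK] at hpoisson
  grw [hpoisson, hv.circleAverage_posLog_norm_le hg hΩ hδ0 hδt hK hgK]
  rw [rpow_def_of_pos (div_pos ht hδ0)]
  apply le_of_eq
  ring_nf

lemma IsPValentOn.norm_sub_le_of_small_radius (hv : IsPValentOn g Ω m) (hg : AnalyticOnNhd ℂ g Ω)
    (hΩ : closedBall c t ⊆ Ω) (ht : 0 < t) (hK : 0 < K) {θ η : ℝ} (hm : 0 < m)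
    (hθ : θ * (4 * m + 1) = 1) (hη0 : 0 < η) (hη1 : η ≤ 1)
    (hgK : ∀ z ∈ closedBall c (η ^ 2 * t), ‖g z - g c‖ < K) (hw : w ∈ closedBall c (θ * t)) :
    ‖g w - g c‖ ≤ K / η ^ (2 * m + 1) := by
  have hm' : (0 : ℝ) < m := by exact_mod_cast hm
  have hθ' : θ = 1 / (4 * m + 1) := eq_one_div_of_mul_eq_one_left hθ
  have hwθ : ‖w - c‖ ≤ θ * t := mem_closedBall_iff_norm.1 hw
  have hwt : ‖w - c‖ < t := by
    have : θ < 1 := by rw [hθ', div_lt_one] <;> linarith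
    nlinarith
  have hexponent : (t + ‖w - c‖) / (t - ‖w - c‖) * m ≤ m + 1 / 2 := by
    rw [div_mul_eq_mul_div, div_le_iff₀ (sub_pos.2 hwt)]
    have : ‖w - c‖ * (4 * m + 1) ≤ t := by
      calc _ ≤ θ * t * (4 * m + 1) := by gcongr
        _ = t := by linear_combination t * hθ
    linarith
  have hbase : t / (η ^ 2 * t) = η⁻¹ ^ 2 := by field_simp
  have hbase1 : 1 ≤ η⁻¹ ^ 2 := one_le_pow₀ ((one_le_inv₀ hη0).2 hη1)
  calc ‖g w - g c‖ ≤ K * (η⁻¹ ^ 2) ^ ((t + ‖w - c‖) / (t - ‖w - c‖) * m) := by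
        rw [← hbase]
        exact hv.norm_sub_le hg hΩ (by positivity) (mul_le_of_le_one_left ht.le
          (pow_le_one₀ hη0.le hη1)) hK hgK (mem_ball_iff_norm.2 hwt)
    _ ≤ K * (η⁻¹ ^ 2) ^ ((m : ℝ) + 1 / 2) := by gcongr
    _ = K / η ^ (2 * m + 1) := by
        have hexponent_eq : ((2 : ℕ) : ℝ) * (m + 1 / 2) = (2 * m + 1 : ℕ) := by push_cast; ring
        rw [← rpow_natCast η⁻¹ 2, ← rpow_mul (by positivity), hexponent_eq, rpow_natCast, inv_pow,
          div_eq_mul_inv]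

end Growth

section Biernacki

lemma norm_sub_le_of_hasSum_of_geometric {E : Type*} [NormedAddCommGroup E]
    {u : ℕ → E} {S : E} (hu : HasSum u S) {m : ℕ} {A M q : ℝ} (hq0 : 0 ≤ q) (hq1 : q < 1)
    (hA : ∀ i ∈ Finset.Icc 1 m, ‖u i‖ ≤ A) (hM : ∀ i, m < i → ‖u i‖ ≤ M * q ^ i) :
    ‖S - u 0‖ ≤ m * A + M * q ^ (m + 1) / (1 - q) := by
  have hhead : ‖∑ i ∈ Finset.Icc 1 m, u i‖ ≤ m * A := by
    simpa using norm_sum_le_of_le _ hA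
  have hgeom : HasSum (fun i => M * q ^ (m + 1) * q ^ i) (M * q ^ (m + 1) / (1 - q)) :=
    (hasSum_geometric_of_lt_one hq0 hq1).mul_left _
  have htail : ‖∑' i, u (i + (m + 1))‖ ≤ M * q ^ (m + 1) / (1 - q) :=
    tsum_of_norm_bounded hgeom fun i => (hM _ (by omega)).trans_eq (by ring)
  have hsplit : S - u 0 = ∑ i ∈ Finset.Icc 1 m, u i + ∑' i, u (i + (m + 1)) := by
    rw [← hu.tsum_eq, ← hu.summable.sum_add_tsum_nat_add (m + 1), Finset.range_eq_Ico,
      Finset.sum_eq_sum_Ico_succ_bot (Nat.succ_pos m), add_assoc, add_sub_cancel_left]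
    rfl
  rw [hsplit]
  exact (norm_add_le _ _).trans (add_le_add hhead htail)

variable {b : ℕ → ℂ} {g : ℂ → ℂ} {R A θ η : ℝ} {m : ℕ}

lemma norm_sub_le_near_zero_of_coeff_le
    (hg : ∀ z ∈ ball (0 : ℂ) R, HasSum (fun k => b k * z ^ k) (g z))
    (hA : ∀ i ∈ Finset.Icc 1 m, ‖b i‖ * R ^ i ≤ A) {r M q : ℝ} (hr : 0 < r) (hrR : r < R)
    (hM : ∀ z ∈ closedBall (0 : ℂ) r, ‖g z - g 0‖ ≤ M) (hq0 : 0 ≤ q) (hq1 : q < 1)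
    {z : ℂ} (hz : z ∈ closedBall 0 (q * r)) :
    ‖g z - g 0‖ ≤ m * A + M * q ^ (m + 1) / (1 - q) := by
  have hzr : ‖z‖ ≤ q * r := mem_closedBall_zero_iff.1 hz
  have hzR : ‖z‖ ≤ R := by nlinarith
  have hzR' : z ∈ ball 0 R := mem_ball_zero_iff.2 (by nlinarith)
  have hb0 : g 0 = b 0 * z ^ 0 := by simpa using eq_coeff_zero_of_hasSum (hr.trans hrR) hg
  rw [hb0]
  refine norm_sub_le_of_hasSum_of_geometric (hg z hzR') hq0 hq1 (fun i hi => ?_) fun i hi => ?_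
  · rw [norm_mul, norm_pow]
    grw [hzR, hA i hi]
  · rw [norm_mul, norm_pow]
    grw [hzr, ← norm_coeff_mul_pow_le_of_hasSum hg hr hrR
      (fun z hz => hM z (sphere_subset_closedBall hz)) (Nat.zero_lt_of_lt hi)]
    exact le_of_eq (by ring)

-- `8 * η = θ ^ (m + 1)` makes the terms of index `> m` contribute less than `M / 2` after division
-- by the factor `η ^ (2 * m + 1)` of `IsPValentOn.norm_sub_le_of_small_radius`.
lemma norm_sub_lt_of_coeff_le_of_small_radius (hθ0 : 0 < θ) (hθ1 : θ ≤ 1)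
    (hη : 8 * η = θ ^ (m + 1)) (hR : 0 < R)
    (hg : ∀ z ∈ ball (0 : ℂ) R, HasSum (fun k => b k * z ^ k) (g z))
    (hA : ∀ i ∈ Finset.Icc 1 m, ‖b i‖ * R ^ i ≤ A) {M : ℝ} (hM0 : 0 < M)
    (hM : ∀ z ∈ closedBall (0 : ℂ) (θ * (R / 2)), ‖g z - g 0‖ ≤ M)
    {z : ℂ} (hz : z ∈ closedBall 0 (η ^ 2 * (R / 2))) :
    ‖g z - g 0‖ < m * A + M * η ^ (2 * m + 1) / 2 := by
  have hη0 : 0 < η := by linarith [pow_pos hθ0 (m + 1)]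
  have hηθ : 8 * η ≤ θ := hη ▸ pow_le_of_le_one hθ0.le hθ1 (Nat.succ_ne_zero m)
  have hratio : η ^ 2 / θ ≤ 1 / 2 := by
    rw [div_le_iff₀ hθ0]
    nlinarith
  have hratio_pow : (η ^ 2 / θ) ^ (m + 1) = η ^ (2 * m + 1) / 8 := by
    rw [div_pow, ← hη]
    field_simp
    ring
  have hradius : η ^ 2 * (R / 2) = η ^ 2 / θ * (θ * (R / 2)) := by field_simp
  rw [hradius] at hz
  refine (norm_sub_le_near_zero_of_coeff_le hg hA (by positivity) (by nlinarith) hM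
    (by positivity) (by linarith) hz).trans_lt ?_
  gcongr ?_ + ?_
  rw [hratio_pow, div_lt_iff₀ (by linarith)]
  nlinarith [mul_pos hM0 (pow_pos hη0 (2 * m + 1))]

lemma IsPValentOn.norm_sub_le_of_coeff_le (hm : 0 < m) (hθ : θ * (4 * m + 1) = 1)
    (hη : 8 * η = θ ^ (m + 1)) (hR : 0 < R)
    (hg : ∀ z ∈ ball (0 : ℂ) R, HasSum (fun k => b k * z ^ k) (g z))
    (hv : IsPValentOn g (ball 0 R) m) (hA : ∀ i ∈ Finset.Icc 1 m, ‖b i‖ * R ^ i ≤ A)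
    {w : ℂ} (hw : w ∈ closedBall 0 (θ * (R / 2))) :
    ‖g w - g 0‖ ≤ 2 * m * A / η ^ (2 * m + 1) := by
  have hθ0 : 0 < θ := pos_of_mul_pos_left (hθ ▸ one_pos) (by positivity)
  have hθ1 : θ ≤ 1 := by nlinarith
  have hη0 : 0 < η := by linarith [pow_pos hθ0 (m + 1)]
  have hη1 : η ≤ 1 := by linarith [pow_le_one₀ (n := m + 1) hθ0.le hθ1]
  have hA0 : 0 ≤ A := le_trans (by positivity) (hA 1 (Finset.mem_Icc.2 ⟨le_rfl, hm⟩))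
  have han := analyticOnNhd_of_hasSum hR hg
  obtain ⟨w₀, hw₀, hmax⟩ := (isCompact_closedBall (0 : ℂ) (θ * (R / 2))).exists_isMaxOn
    ⟨w, hw⟩ (f := fun z => ‖g z - g 0‖)
    ((han.continuousOn.mono (closedBall_subset_ball (by nlinarith))).sub continuousOn_const).norm
  refine (hmax hw).trans ?_
  set M := ‖g w₀ - g 0‖
  rcases (norm_nonneg _ : 0 ≤ M).eq_or_lt with hM0 | hM0
  · simp only [← hM0]
    positivity
  have hgrowth : M ≤ (m * A + M * η ^ (2 * m + 1) / 2) / η ^ (2 * m + 1) :=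
    hv.norm_sub_le_of_small_radius han (closedBall_subset_ball (by linarith)) (by positivity)
      (by positivity) hm hθ hη0 hη1 (fun z hz =>
        norm_sub_lt_of_coeff_le_of_small_radius hθ0 hθ1 hη hR hg hA hM0 hmax hz) hw₀
  rw [le_div_iff₀ (by positivity)] at hgrowth ⊢
  linarith

theorem exists_norm_coeff_succ_le_of_isPValentOn (hm : 0 < m) :
    ∃ C : ℝ, 0 < C ∧ ∀ R : ℝ, 0 < R → ∀ (b : ℕ → ℂ) (g : ℂ → ℂ),
      (∀ z ∈ ball (0 : ℂ) R, HasSum (fun k => b k * z ^ k) (g z)) →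
      IsPValentOn g (ball 0 R) m →
      ∃ i ∈ Finset.Icc 1 m, ‖b (m + 1)‖ * R ^ (m + 1) ≤ C * (‖b i‖ * R ^ i) := by
  have hm' : (0 : ℝ) < m := by exact_mod_cast hm
  obtain ⟨θ, hθ⟩ : ∃ θ : ℝ, θ * (4 * m + 1) = 1 := ⟨(4 * m + 1)⁻¹, by field_simp⟩
  obtain ⟨η, hη⟩ : ∃ η : ℝ, 8 * η = θ ^ (m + 1) := ⟨θ ^ (m + 1) / 8, by ring⟩
  have hθ0 : 0 < θ := pos_of_mul_pos_left (hθ ▸ one_pos) (by positivity)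
  have hη0 : 0 < η := by linarith [pow_pos hθ0 (m + 1)]
  refine ⟨2 * m / η ^ (2 * m + 1) * (2 / θ) ^ (m + 1), by positivity, fun R hR b g hg hv => ?_⟩
  obtain ⟨i, hi, hmax⟩ := Finset.exists_max_image (Finset.Icc 1 m) (fun i => ‖b i‖ * R ^ i)
    ⟨1, Finset.mem_Icc.2 ⟨le_rfl, hm⟩⟩
  refine ⟨i, hi, ?_⟩
  have hcauchy := norm_coeff_mul_pow_le_of_hasSum hg (r := θ * (R / 2)) (by positivity)
    (by nlinarith) (fun w hw => hv.norm_sub_le_of_coeff_le hm hθ hη hR hg hmax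
      (sphere_subset_closedBall hw)) (Nat.succ_pos m)
  calc ‖b (m + 1)‖ * R ^ (m + 1)
      = ‖b (m + 1)‖ * (θ * (R / 2)) ^ (m + 1) * (2 / θ) ^ (m + 1) := by
        rw [mul_assoc, ← mul_pow]
        field_simp
    _ ≤ 2 * m * (‖b i‖ * R ^ i) / η ^ (2 * m + 1) * (2 / θ) ^ (m + 1) := by gcongr
    _ = _ := by ring

end Biernacki

section Recurrence

lemma exists_recurrence_of_norm_le {𝕜 : Type*} [NormedField 𝕜] {a : ℕ → 𝕜} {n : ℕ}
    {s : Finset ℕ} {B : ℕ → ℝ} (hB : ∀ j ∈ s, 0 ≤ B j)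
    (ha : ∀ k, n ≤ k → ∃ j ∈ s, ‖a k‖ ≤ B j * ‖a (k - j)‖) :
    ∃ c : ℕ → ℕ → 𝕜, (∀ k, n ≤ k → a k = ∑ j ∈ s, c j k * a (k - j)) ∧
      ∀ j ∈ s, ∀ k, n ≤ k → ‖c j k‖ ≤ B j := by
  choose! p hps hp using ha
  refine ⟨fun j k => if j = p k then a k / a (k - j) else 0, fun k hk => ?_, fun j hj k hk => ?_⟩
  · have hzero : a (k - p k) = 0 → a k = 0 := fun h => by simpa [h] using hp k hk
    beta_reduce
    rw [Finset.sum_eq_single_of_mem (p k) (hps k hk) fun j _ hj => by rw [if_neg hj, zero_mul],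
      if_pos rfl, div_mul_cancel_of_imp hzero]
  · beta_reduce
    rcases eq_or_ne j (p k) with rfl | hjk
    · rw [if_pos rfl, norm_div]
      exact div_le_of_le_mul₀ (norm_nonneg _) (hB _ hj) (hp k hk)
    · rw [if_neg hjk, norm_zero]
      exact hB j hj

lemma exists_norm_coeff_le_of_isSPValentOn {m : ℕ} (hm : 0 < m) :
    ∃ C : ℝ, 0 < C ∧ ∀ R : ℝ, 0 < R → ∀ (a : ℕ → ℂ) (f : ℂ → ℂ),
      (∀ z ∈ ball (0 : ℂ) R, HasSum (fun k => a k * z ^ k) (f z)) →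
      (∀ s, IsSPValentOn f (ball 0 R) s (s + m)) →
      ∀ k, m + 1 ≤ k → ∃ j ∈ Finset.Icc 1 m, ‖a k‖ ≤ C * R⁻¹ ^ j * ‖a (k - j)‖ := by
  obtain ⟨C, hC, hbiernacki⟩ := exists_norm_coeff_succ_le_of_isPValentOn hm
  refine ⟨C, hC, fun R hR a f hf hv k hk => ?_⟩
  obtain ⟨s, rfl⟩ := Nat.exists_eq_add_of_le' hk
  obtain ⟨i, hi, hle⟩ := hbiernacki R hR (fun i => a (s + i)) _ (fun z => hasSum_tail hf s)
    ((hv s).isPValentOn_tail hR hf)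
  obtain ⟨hi1, him⟩ := Finset.mem_Icc.1 hi
  refine ⟨m + 1 - i, Finset.mem_Icc.2 ⟨by omega, by omega⟩, ?_⟩
  have hindex : s + (m + 1) - (m + 1 - i) = s + i := by omega
  rw [hindex]
  have hpow : R ^ (m + 1) = R ^ (m + 1 - i) * R ^ i := by rw [← pow_add]; congr 1; omega
  have hle' : ‖a (s + (m + 1))‖ * R ^ (m + 1 - i) ≤ C * ‖a (s + i)‖ :=
    le_of_mul_le_mul_right (by simpa only [hpow, mul_assoc] using hle) (pow_pos hR i)
  rw [inv_pow, mul_right_comm, ← div_eq_mul_inv]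
  exact (le_div_iff₀ (by positivity)).2 hle'

end Recurrence

/-- If `f(z) = ∑ a_k z^k` is `(s, s+m)`-valent in `D_R` for every `s`, then the Taylor
coefficients of `f` satisfy a linear homogeneous non-stationary recurrence relation
`a_k = ∑_{j=1}^m c_j(k) a_{k-j}` with coefficients uniformly bounded by
`|c_j(k)| ≤ C ρ^j`, where `ρ = R⁻¹` and `C > 0` depends only on `m`. -/
theorem statement5 (m : ℕ) (hm : 0 < m) :
    ∃ C : ℝ, 0 < C ∧
      ∀ (R : ℝ), 0 < R → ∀ (a : ℕ → ℂ) (f : ℂ → ℂ),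
        (∀ z ∈ Metric.ball (0 : ℂ) R, HasSum (fun k => a k * z ^ k) (f z)) →
        (∀ s : ℕ, IsSPValentOn f (Metric.ball (0 : ℂ) R) s (s + m)) →
        ∃ c : ℕ → ℕ → ℂ,
          (∀ k : ℕ, m + 1 ≤ k → a k = ∑ j ∈ Finset.Icc 1 m, c j k * a (k - j)) ∧
          (∀ j ∈ Finset.Icc 1 m, ∀ k : ℕ, m + 1 ≤ k →
            ‖c j k‖ ≤ C * R⁻¹ ^ j) := by
  obtain ⟨C, hC, hdominated⟩ := exists_norm_coeff_le_of_isSPValentOn hm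
  exact ⟨C, hC, fun R hR a f hf hv =>
    exists_recurrence_of_norm_le (fun _ _ => by positivity) (hdominated R hR a f hf hv)⟩
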